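/- arXiv:1711.00680 — 3 statements merged into one kernel-verified Lean document; each statement's English description precedes it below -/
import Mathlib

section
/- Let Z ⊆ M ⊊ N ⊆ V. Then for every x_Z ∈ 𝔛_Z: (a) ν_Z^M(x_Z) = ν_Z^N(x_Z) + d̃_Z^{(M)}(x_Z); and (b) d̃_Z^{(M)}(x_Z) = Σ_{A ⊆ Z} (λ_A^M(x_A) − λ_A^N(x_A)). -/
open Finset

variable {V : Type*} [Fintype V] [DecidableEq V]
variable {𝔛 : V → Type*} [∀ v, Fintype (𝔛 v)] [∀ v, DecidableEq (𝔛 v)]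
  [∀ v, Nonempty (𝔛 v)]

/-- The marginal `p_A` of a distribution `p` on the full table, evaluated at the
`A`-coordinates of `x`. -/
noncomputable def margin (p : (∀ v, 𝔛 v) → ℝ) (A : Finset V) (x : ∀ v, 𝔛 v) : ℝ :=
  ∑ y ∈ Finset.univ.filter (fun y : ∀ v, 𝔛 v => ∀ v ∈ A, y v = x v), p y

/-- `ν_L^M(x_L) = (1/|𝔛_{M∖L}|) Σ_{j ∈ 𝔛_M : j_L = x_L} log p_M(j)`, written with sums over
full configurations (for `L ⊆ M` the extra coordinates cancel against the normalization). -/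
noncomputable def nu (p : (∀ v, 𝔛 v) → ℝ) (L M : Finset V) (x : ∀ v, 𝔛 v) : ℝ :=
  (∏ v ∈ Lᶜ, (Fintype.card (𝔛 v) : ℝ))⁻¹ *
    ∑ j ∈ Finset.univ.filter (fun j : ∀ v, 𝔛 v => ∀ v ∈ L, j v = x v),
      Real.log (margin p M j)

/-- The marginal log-linear parameter `λ_L^M(x_L) = Σ_{L' ⊆ L} (−1)^{|L∖L'|} ν_{L'}^M(x_{L'})`. -/
noncomputable def mll (p : (∀ v, 𝔛 v) → ℝ) (L M : Finset V) (x : ∀ v, 𝔛 v) : ℝ :=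
  ∑ L' ∈ L.powerset, (-1 : ℝ) ^ ((L \ L').card) * nu p L' M x

/-- `d^{(M)}(x_M) = log p_M(x_M) − ν_M^N(x_M)`. -/
noncomputable def dd (p : (∀ v, 𝔛 v) → ℝ) (M N : Finset V) (x : ∀ v, 𝔛 v) : ℝ :=
  Real.log (margin p M x) - nu p M N x

/-- `d̃_Z^{(M)}(x_Z) = (1/|𝔛_{M∖Z}|) Σ_{j ∈ 𝔛_M : j_Z = x_Z} d^{(M)}(j)`, written with sums
over full configurations (for `Z ⊆ M` the extra coordinates cancel). -/
noncomputable def dtilde (p : (∀ v, 𝔛 v) → ℝ) (M N Z : Finset V) (x : ∀ v, 𝔛 v) : ℝ :=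
  (∏ v ∈ Zᶜ, (Fintype.card (𝔛 v) : ℝ))⁻¹ *
    ∑ j ∈ Finset.univ.filter (fun j : ∀ v, 𝔛 v => ∀ v ∈ Z, j v = x v), dd p M N j

/-
Under the uniform distribution on configurations, `ν_L^M` is the conditional expectation of
`log p_M` given the coordinates in `L`. Since `Z ⊆ M`, the tower property turns the average over
`𝔛_{M∖Z}` of `ν_M^N` into `ν_Z^N`, so averaging the definition of `d^{(M)}` gives (a). Möbius
inversion over the subsets of `Z` gives `ν_Z = ∑_{A ⊆ Z} λ_A` for `M` and for `N`, and subtracting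
the two yields (b).
-/

open scoped BigOperators

section Powerset

variable {ι G : Type*} [DecidableEq ι] [AddCommGroup G]

theorem sum_Icc_neg_one_pow_card_sdiff {L Z : Finset ι} (hLZ : L ⊆ Z) :
    ∑ A ∈ Icc L Z, (-1 : ℤ) ^ #(A \ L) = if L = Z then 1 else 0 := by
  have hdisj : ∀ B ∈ (Z \ L).powerset, Disjoint B L := fun B hB ↦
    disjoint_sdiff_self_left.mono_left (mem_powerset.1 hB)
  have hinj : Set.InjOn (L ∪ ·) ((Z \ L).powerset : Set (Finset ι)) := fun B hB C hC h ↦ by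
    rw [← union_sdiff_cancel_left (hdisj B hB).symm, ← union_sdiff_cancel_left (hdisj C hC).symm]
    exact congrArg (· \ L) h
  calc ∑ A ∈ Icc L Z, (-1 : ℤ) ^ #(A \ L)
      = ∑ B ∈ (Z \ L).powerset, (-1 : ℤ) ^ #B := by
        rw [Icc_eq_image_powerset hLZ, sum_image hinj]
        exact sum_congr rfl fun B hB ↦ by rw [union_sdiff_cancel_left (hdisj B hB).symm]
    _ = if L = Z then 1 else 0 := by
        simp only [sum_powerset_neg_one_pow_card, sdiff_eq_empty_iff_subset, hLZ.ge_iff_eq]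

theorem sum_powerset_sum_powerset_neg_one_pow_card_sdiff_smul (f : Finset ι → G) (Z : Finset ι) :
    ∑ A ∈ Z.powerset, ∑ L ∈ A.powerset, (-1 : ℤ) ^ #(A \ L) • f L = f Z := by
  calc ∑ A ∈ Z.powerset, ∑ L ∈ A.powerset, (-1 : ℤ) ^ #(A \ L) • f L
      = ∑ L ∈ Z.powerset, ∑ A ∈ Icc L Z, (-1 : ℤ) ^ #(A \ L) • f L := by
        refine sum_comm' fun A L ↦ ?_
        simp only [mem_powerset, mem_Icc]
        exact ⟨fun ⟨hAZ, hLA⟩ ↦ ⟨⟨hLA, hAZ⟩, hLA.trans hAZ⟩, fun ⟨⟨hLA, hAZ⟩, _⟩ ↦ ⟨hAZ, hLA⟩⟩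
    _ = ∑ L ∈ Z.powerset, if L = Z then f L else 0 := by
        refine sum_congr rfl fun L hL ↦ ?_
        rw [← sum_smul, sum_Icc_neg_one_pow_card_sdiff (mem_powerset.1 hL), ite_smul, one_smul,
          zero_smul]
    _ = f Z := by rw [sum_ite_eq_of_mem' _ _ _ (mem_powerset_self Z)]

end Powerset

section Cylinder

variable {ι : Type*} [Fintype ι] [DecidableEq ι] {α : ι → Type*} [∀ i, Fintype (α i)]
  [∀ i, DecidableEq (α i)]

/-- The cylinder of configurations that agree with `x` on the coordinates in `L`. -/
def cylinder (L : Finset ι) (x : ∀ i, α i) : Finset (∀ i, α i) :=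
  univ.filter fun y ↦ ∀ i ∈ L, y i = x i

theorem mem_cylinder {L : Finset ι} {x y : ∀ i, α i} :
    y ∈ cylinder L x ↔ ∀ i ∈ L, y i = x i :=
  mem_filter_univ y

theorem self_mem_cylinder (L : Finset ι) (x : ∀ i, α i) : x ∈ cylinder L x :=
  mem_cylinder.2 fun _ _ ↦ rfl

theorem mem_cylinder_comm {L : Finset ι} {x y : ∀ i, α i} :
    y ∈ cylinder L x ↔ x ∈ cylinder L y := by
  simp only [mem_cylinder, eq_comm]

theorem mem_cylinder_iff_of_mem_cylinder {L M : Finset ι} (hLM : L ⊆ M) {x y z : ∀ i, α i}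
    (hyz : y ∈ cylinder M z) : y ∈ cylinder L x ↔ z ∈ cylinder L x := by
  simp only [mem_cylinder] at hyz ⊢
  exact forall₂_congr fun i hi ↦ by rw [hyz i (hLM hi)]

theorem card_cylinder (L : Finset ι) (x : ∀ i, α i) :
    #(cylinder L x) = ∏ i ∈ Lᶜ, Fintype.card (α i) := by
  have hpi : cylinder L x = Fintype.piFinset fun i ↦ if i ∈ L then {x i} else univ := by
    ext y
    simp only [mem_cylinder, Fintype.mem_piFinset]
    exact forall_congr' fun i ↦ by split_ifs with hi <;> simp [hi]
  rw [hpi, Fintype.card_piFinset, ← prod_mul_prod_compl L, prod_eq_one, one_mul]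
  · exact prod_congr rfl fun i hi ↦ by rw [if_neg (mem_compl.1 hi), card_univ]
  · exact fun i hi ↦ by rw [if_pos hi, card_singleton]

/-- The average of `f` over the configurations that agree with `x` on `L`, that is, the conditional
expectation of `f` given the coordinates in `L` under the uniform distribution. For
`f = log p_M` it is `ν_L^M`, and for `f = d^{(M)}` it is `d̃_L^{(M)}`. -/
def cylinderMean {E : Type*} [AddCommMonoid E] [Module ℚ≥0 E] (f : (∀ i, α i) → E)
    (L : Finset ι) (x : ∀ i, α i) : E :=
  𝔼 y ∈ cylinder L x, f y

theorem cylinderMean_eq_inv_prod_card_mul_sum {K : Type*} [Semifield K] [CharZero K]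
    (f : (∀ i, α i) → K) (L : Finset ι) (x : ∀ i, α i) :
    cylinderMean f L x =
      (∏ i ∈ Lᶜ, (Fintype.card (α i) : K))⁻¹ * ∑ y ∈ cylinder L x, f y := by
  rw [cylinderMean, expect_eq_sum_div_card, card_cylinder, Nat.cast_prod, div_eq_inv_mul]

theorem cylinderMean_cylinderMean {E : Type*} [AddCommMonoid E] [Module ℚ≥0 E] {L M : Finset ι}
    (hLM : L ⊆ M) (f : (∀ i, α i) → E) (x : ∀ i, α i) :
    cylinderMean (cylinderMean f M) L x = cylinderMean f L x := by
  set c : ℚ≥0 := ((∏ i ∈ Mᶜ, Fintype.card (α i) : ℕ) : ℚ≥0) with hc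
  have hcard : ∀ y : ∀ i, α i, (#(cylinder M y) : ℚ≥0) = c := fun y ↦ by rw [card_cylinder, hc]
  have hc₀ : c ≠ 0 := by
    rw [← hcard x, Nat.cast_ne_zero]
    exact card_ne_zero_of_mem (self_mem_cylinder M x)
  have hsum : ∑ y ∈ cylinder L x, cylinderMean f M y = ∑ z ∈ cylinder L x, f z := by
    calc ∑ y ∈ cylinder L x, cylinderMean f M y
        = ∑ y ∈ cylinder L x, ∑ z ∈ cylinder M y, c⁻¹ • f z := by
          simp only [cylinderMean, expect, hcard, smul_sum]
      _ = ∑ z ∈ cylinder L x, ∑ _y ∈ cylinder M z, c⁻¹ • f z := by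
          refine sum_comm' fun y z ↦ ?_
          have hcomm : z ∈ cylinder M y ↔ y ∈ cylinder M z := mem_cylinder_comm
          rw [hcomm, and_comm]
          exact and_congr_right (mem_cylinder_iff_of_mem_cylinder hLM)
      _ = ∑ z ∈ cylinder L x, f z := by
          simp only [sum_const, ← Nat.cast_smul_eq_nsmul ℚ≥0, hcard, smul_inv_smul₀ hc₀]
  rw [cylinderMean, expect, hsum, cylinderMean, expect]

variable {E : Type*} [AddCommGroup E] [Module ℚ≥0 E]

/-- The interaction of `f` among the coordinates in `L`: the Möbius transform in `L` of the
cylinder averages of `f`. For `f = log p_M` it is the marginal log-linear parameter `λ_L^M`. -/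
def interaction (f : (∀ i, α i) → E) (L : Finset ι) (x : ∀ i, α i) : E :=
  ∑ L' ∈ L.powerset, (-1 : ℤ) ^ #(L \ L') • cylinderMean f L' x

theorem sum_powerset_interaction (f : (∀ i, α i) → E) (Z : Finset ι) (x : ∀ i, α i) :
    ∑ A ∈ Z.powerset, interaction f A x = cylinderMean f Z x :=
  sum_powerset_sum_powerset_neg_one_pow_card_sdiff_smul (fun L ↦ cylinderMean f L x) Z

theorem cylinderMean_sub_cylinderMean {Z M : Finset ι} (hZM : Z ⊆ M) (f g : (∀ i, α i) → E)
    (x : ∀ i, α i) :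
    cylinderMean (fun y ↦ f y - cylinderMean g M y) Z x =
      cylinderMean f Z x - cylinderMean g Z x := by
  rw [← cylinderMean_cylinderMean hZM g]
  exact expect_sub_distrib _ _ _

theorem stmt5_general {Z M : Finset ι} (hZM : Z ⊆ M) (f g : (∀ i, α i) → E) (x : ∀ i, α i) :
    cylinderMean f Z x =
        cylinderMean g Z x + cylinderMean (fun y ↦ f y - cylinderMean g M y) Z x ∧
      cylinderMean (fun y ↦ f y - cylinderMean g M y) Z x =
        ∑ A ∈ Z.powerset, (interaction f A x - interaction g A x) := by
  rw [cylinderMean_sub_cylinderMean hZM, sum_sub_distrib, sum_powerset_interaction,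
    sum_powerset_interaction]
  exact ⟨(add_sub_cancel _ _).symm, rfl⟩

theorem nu_eq_cylinderMean (p : (∀ i, α i) → ℝ) (L M : Finset ι) (x : ∀ i, α i) :
    nu p L M x = cylinderMean (fun y ↦ Real.log (margin p M y)) L x :=
  (cylinderMean_eq_inv_prod_card_mul_sum _ L x).symm

theorem mll_eq_interaction (p : (∀ i, α i) → ℝ) (L M : Finset ι) (x : ∀ i, α i) :
    mll p L M x = interaction (fun y ↦ Real.log (margin p M y)) L x := by
  simp only [mll, interaction, nu_eq_cylinderMean, zsmul_eq_mul, Int.cast_pow, Int.cast_neg,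
    Int.cast_one]

theorem dtilde_eq_cylinderMean (p : (∀ i, α i) → ℝ) (M N Z : Finset ι) (x : ∀ i, α i) :
    dtilde p M N Z x =
      cylinderMean (fun y ↦ Real.log (margin p M y) -
        cylinderMean (fun z ↦ Real.log (margin p N z)) M y) Z x := by
  simp only [← nu_eq_cylinderMean]
  exact (cylinderMean_eq_inv_prod_card_mul_sum _ Z x).symm

end Cylinder

theorem stmt5 (p : (∀ v, 𝔛 v) → ℝ) (hp : ∀ x, 0 < p x) (hsum : ∑ x, p x = 1)
    (Z M N : Finset V) (hZM : Z ⊆ M) (hMN : M ⊂ N) :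
    ∀ x : ∀ v, 𝔛 v,
      nu p Z M x = nu p Z N x + dtilde p M N Z x ∧
      dtilde p M N Z x = ∑ A ∈ Z.powerset, (mll p A M x - mll p A N x) := by
  intro x
  simpa only [nu_eq_cylinderMean, mll_eq_interaction, dtilde_eq_cylinderMean] using
    stmt5_general hZM (fun y ↦ Real.log (margin p M y)) (fun y ↦ Real.log (margin p N y)) x
end

section
/- Let ∅ ≠ S ⊆ L ⊆ M ⊊ N ⊆ V. Then 𝔛_N is strictly collapsible over N∖M into 𝔛_M with respect to the set C_S = {λ_A^N : S ⊆ A ⊆ L}, meaning λ_A^M(x_A) = λ_A^N(x_A) for every A with S ⊆ A ⊆ L and every x_A, and λ_Z^N(x_Z) = 0 for every Z ⊆ N with S ⊊ Z and Z ∩ (N∖M) ≠ ∅ and every x_Z, if and only if both: (a) Σ_{R ⊆ S} (−1)^{|S∖R|} d̃_{L∖R}^{(M)}(x_{L∖R}) = 0 for every x_L ∈ 𝔛_L, and (b) Σ_{Z ⊆ S} (−1)^{|S∖Z|} ν_{(N∖S)∪Z}^N(x_{N∖S}, x_Z) = Σ_{Z ⊆ S} (−1)^{|S∖Z|} ν_{(M∖S)∪Z}^N(x_{M∖S},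 x_Z) for every x_N ∈ 𝔛_N. -/
open Finset

variable {V : Type*} [Fintype V] [DecidableEq V]
variable {𝔛 : V → Type*} [∀ v, Fintype (𝔛 v)] [∀ v, DecidableEq (𝔛 v)]
  [∀ v, Nonempty (𝔛 v)]

/-!
Averaging over the coordinates outside `A` is an operator `E A` on functions of configurations, and
`E A * E B = E (A ∩ B)`. Hence the Möbius transform of `E` is a family of pairwise orthogonal
idempotents `P A`, so a sum `∑ A ∈ T, P A` annihilates a function iff each of its terms does.
The parameters `λ_A^M` are `P A` applied to `log p_M`, while the alternating sums in (a) and (b)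
are, up to sign, `∑ A ∈ Icc S L, P A` applied to `d^{(M)}`, and `∑ A ∈ Icc S N, P A` and
`∑ A ∈ Icc S M, P A` applied to `log p_N`.
-/

open scoped BigOperators

section MoebiusTransform

variable {ι G : Type*} [DecidableEq ι] [AddCommGroup G]

/-- The Möbius transform of a function on the lattice of finite sets: the inverse of the operation
`f ↦ fun A => ∑ B ∈ A.powerset, f B`. The signs are integers so that it makes sense in any abelian
group. -/
def moebiusTransform (f : Finset ι → G) (A : Finset ι) : G :=
  ∑ B ∈ A.powerset, (-1 : ℤ) ^ #(A \ B) • f B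

theorem moebiusTransform_congr {f g : Finset ι → G} {A : Finset ι} (h : ∀ B ⊆ A, f B = g B) :
    moebiusTransform f A = moebiusTransform g A :=
  sum_congr rfl fun B hB => by rw [h B (mem_powerset.1 hB)]

theorem moebiusTransform_zero (A : Finset ι) : moebiusTransform (fun _ => (0 : G)) A = 0 := by
  simp [moebiusTransform]

theorem moebiusTransform_insert (f : Finset ι → G) {a : ι} {A : Finset ι} (ha : a ∉ A) :
    moebiusTransform f (insert a A) = moebiusTransform (fun B => f (insert a B) - f B) A := by
  rw [moebiusTransform, sum_powerset_insert ha, ← sum_add_distrib]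
  refine sum_congr rfl fun B hB => ?_
  have haB : a ∉ B := fun h => ha (mem_powerset.1 hB h)
  have h_without : #(insert a A \ B) = #(A \ B) + 1 := by
    rw [insert_sdiff_of_notMem _ haB, card_insert_of_notMem (by simp [ha])]
  have h_with : insert a A \ insert a B = A \ B := by
    rw [insert_sdiff_insert, sdiff_insert_of_notMem ha]
  rw [h_without, h_with, pow_succ, smul_sub, mul_neg_one, neg_smul, neg_add_eq_sub]

theorem sum_powerset_moebiusTransform (f : Finset ι → G) (B : Finset ι) :
    ∑ A ∈ B.powerset, moebiusTransform f A = f B := by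
  induction B using Finset.induction_on generalizing f with
  | empty => simp [moebiusTransform]
  | insert a B ha ih =>
    have h_insert : ∑ A ∈ B.powerset, moebiusTransform f (insert a A) = f (insert a B) - f B := by
      rw [← ih fun B => f (insert a B) - f B]
      exact sum_congr rfl fun A hA =>
        moebiusTransform_insert f fun h => ha (mem_powerset.1 hA h)
    rw [sum_powerset_insert ha, ih, h_insert, add_sub_cancel]

theorem moebiusTransform_sum_powerset (f : Finset ι → G) (B : Finset ι) :
    moebiusTransform (fun A => ∑ C ∈ A.powerset, f C) B = f B := by
  induction B using Finset.induction_on generalizing f with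
  | empty => simp [moebiusTransform]
  | insert a B ha ih =>
    rw [moebiusTransform_insert _ ha, ← ih fun C => f (insert a C)]
    refine moebiusTransform_congr fun A hA => ?_
    rw [sum_powerset_insert fun h => ha (hA h), add_sub_cancel_left]

theorem moebiusTransform_eq_zero_of_insert {f : Finset ι → G} {a : ι} {A : Finset ι} (ha : a ∈ A)
    (h : ∀ B, f (insert a B) = f B) : moebiusTransform f A = 0 := by
  rw [← insert_erase ha, moebiusTransform_insert f (notMem_erase a A)]
  simp only [h, sub_self, moebiusTransform_zero]

theorem moebiusTransform_comp_sdiff (f : Finset ι → G) (S : Finset ι) :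
    moebiusTransform (fun R => f (S \ R)) S = (-1 : ℤ) ^ #S • moebiusTransform f S := by
  rw [moebiusTransform, moebiusTransform, smul_sum]
  refine sum_nbij' (S \ ·) (S \ ·) (by simp) (by simp) ?_ ?_ fun R hR => ?_
  · exact fun R hR => Finset.sdiff_sdiff_eq_self (mem_powerset.1 hR)
  · exact fun R hR => Finset.sdiff_sdiff_eq_self (mem_powerset.1 hR)
  · have hRS := mem_powerset.1 hR
    rw [Finset.sdiff_sdiff_eq_self hRS, smul_smul, ← card_sdiff_add_card_eq_card hRS, pow_add,
      mul_assoc, ← mul_pow, neg_one_mul, neg_neg, one_pow, mul_one]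

theorem moebiusTransform_sdiff_union (f : Finset ι → G) {S N : Finset ι} (hSN : S ⊆ N) :
    moebiusTransform (fun Z => f (N \ S ∪ Z)) S = ∑ A ∈ Icc S N, moebiusTransform f A := by
  let fiberSum (T : Finset ι) : G := ∑ A ∈ N.powerset with A ∩ S = T, moebiusTransform f A
  have h_fiber : ∀ Z ⊆ S, f (N \ S ∪ Z) = ∑ T ∈ Z.powerset, fiberSum T := by
    intro Z hZ
    have h_maps : ∀ A ∈ (N \ S ∪ Z).powerset, A ∩ S ∈ Z.powerset := by
      intro A hA
      rw [mem_powerset] at hA ⊢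
      grind
    rw [← sum_powerset_moebiusTransform f, ← sum_fiberwise_of_maps_to h_maps]
    refine sum_congr rfl fun T hT => sum_congr ?_ fun _ _ => rfl
    ext A
    simp only [mem_filter, mem_powerset] at hT ⊢
    grind
  rw [moebiusTransform_congr h_fiber, moebiusTransform_sum_powerset]
  refine sum_congr ?_ fun _ _ => rfl
  ext A
  simp only [mem_filter, mem_powerset, mem_Icc, inter_eq_right, and_comm]

theorem moebiusTransform_sdiff (f : Finset ι → G) {S L : Finset ι} (hSL : S ⊆ L) :
    moebiusTransform (fun R => f (L \ R)) S
      = (-1 : ℤ) ^ #S • ∑ A ∈ Icc S L, moebiusTransform f A := by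
  rw [← moebiusTransform_sdiff_union f hSL,
    ← moebiusTransform_comp_sdiff (fun Z => f (L \ S ∪ Z))]
  refine moebiusTransform_congr fun R hR => congrArg f ?_
  grind

theorem moebiusTransform_apply {X F : Type*} [AddCommGroup F] (f : Finset ι → X → F)
    (A : Finset ι) (x : X) :
    moebiusTransform f A x = moebiusTransform (fun B => f B x) A := by
  simp [moebiusTransform, Finset.sum_apply]

theorem moebiusTransform_eq_sum_mul {R : Type*} [Ring R] (f : Finset ι → R) (A : Finset ι) :
    moebiusTransform f A = ∑ B ∈ A.powerset, (-1 : R) ^ #(A \ B) * f B := by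
  simp [moebiusTransform]

end MoebiusTransform

section OrthogonalProjections

theorem sum_smul_eq_zero_iff_of_orthogonalIdempotents {I R F : Type*} [Ring R] [AddCommGroup F]
    [Module R F] {e : I → R} (he : OrthogonalIdempotents e) (T : Finset I) (f : F) :
    (∑ i ∈ T, e i) • f = 0 ↔ ∀ i ∈ T, e i • f = 0 := by
  refine ⟨fun h i hi => ?_, fun h => by rw [sum_smul, sum_eq_zero h]⟩
  rw [← he.mul_sum_of_mem hi, mul_smul, h, smul_zero]

variable {ι R F : Type*} [DecidableEq ι] [Ring R] [AddCommGroup F] [Module R F]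
  {E : Finset ι → R}

theorem moebiusTransform_smul (E : Finset ι → R) (A : Finset ι) (f : F) :
    moebiusTransform E A • f = moebiusTransform (fun B => E B • f) A := by
  simp only [moebiusTransform, sum_smul, smul_assoc]

theorem moebiusTransform_smul_apply {X K : Type*} [Ring K]
    (E : Finset ι → AddMonoid.End (X → K)) (A : Finset ι) (f : X → K) (x : X) :
    (moebiusTransform E A • f) x = ∑ B ∈ A.powerset, (-1 : K) ^ #(A \ B) * (E B • f) x := by
  rw [moebiusTransform_smul, moebiusTransform_apply, moebiusTransform_eq_sum_mul]

theorem mul_moebiusTransform (r : R) (E : Finset ι → R) (A : Finset ι) :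
    r * moebiusTransform E A = moebiusTransform (fun B => r * E B) A := by
  simp only [moebiusTransform, mul_sum, mul_smul_comm]

theorem moebiusTransform_mul (E : Finset ι → R) (A : Finset ι) (r : R) :
    moebiusTransform E A * r = moebiusTransform (fun B => E B * r) A := by
  simp only [moebiusTransform, sum_mul, smul_mul_assoc]

theorem moebiusTransform_mul_of_subset (hE : ∀ A B, E A * E B = E (A ∩ B)) {A B : Finset ι}
    (h : A ⊆ B) : moebiusTransform E A * E B = moebiusTransform E A := by
  rw [moebiusTransform_mul]
  exact moebiusTransform_congr fun C hC => by rw [hE, inter_eq_left.2 (hC.trans h)]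

theorem moebiusTransform_mul_of_not_subset (hE : ∀ A B, E A * E B = E (A ∩ B)) {A B : Finset ι}
    (h : ¬A ⊆ B) : moebiusTransform E A * E B = 0 := by
  obtain ⟨a, haA, haB⟩ := not_subset.1 h
  rw [moebiusTransform_mul]
  exact moebiusTransform_eq_zero_of_insert haA fun C => by rw [hE, hE, insert_inter_of_notMem haB]

theorem moebiusTransform_mul_moebiusTransform (hE : ∀ A B, E A * E B = E (A ∩ B))
    (A B : Finset ι) :
    moebiusTransform E A * moebiusTransform E B = if A = B then moebiusTransform E A else 0 := by
  have h_mul : ∀ C, moebiusTransform E A * E C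
      = ∑ D ∈ C.powerset, if A = D then moebiusTransform E A else 0 := by
    intro C
    rw [sum_ite_eq]
    split_ifs with h
    · exact moebiusTransform_mul_of_subset hE (mem_powerset.1 h)
    · exact moebiusTransform_mul_of_not_subset hE (mt mem_powerset.2 h)
  rw [mul_moebiusTransform, moebiusTransform_congr fun C _ => h_mul C,
    moebiusTransform_sum_powerset]

theorem orthogonalIdempotents_moebiusTransform (hE : ∀ A B, E A * E B = E (A ∩ B)) :
    OrthogonalIdempotents (moebiusTransform E) where
  idem A := by rw [IsIdempotentElem, moebiusTransform_mul_moebiusTransform hE, if_pos rfl]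
  ortho A B hAB := (moebiusTransform_mul_moebiusTransform hE A B).trans (if_neg hAB)

theorem moebiusTransform_sdiff_smul_sub_eq_zero_iff (hE : ∀ A B, E A * E B = E (A ∩ B))
    {S L M : Finset ι} (hSL : S ⊆ L) (hLM : L ⊆ M) (f g : F) :
    moebiusTransform (fun R => E (L \ R)) S • (f - E M • g) = 0 ↔
      ∀ A, S ⊆ A → A ⊆ L → moebiusTransform E A • f = moebiusTransform E A • g := by
  rw [moebiusTransform_sdiff E hSL, smul_assoc,
    ((isUnit_neg_one (α := ℤ)).pow #S).smul_eq_zero,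
    sum_smul_eq_zero_iff_of_orthogonalIdempotents (orthogonalIdempotents_moebiusTransform hE)]
  simp only [mem_Icc, and_imp]
  refine forall₃_congr fun A _ hAL => ?_
  rw [smul_sub, smul_smul, moebiusTransform_mul_of_subset hE (hAL.trans hLM), sub_eq_zero]

theorem moebiusTransform_sdiff_union_smul_eq_iff (hE : ∀ A B, E A * E B = E (A ∩ B))
    {S M N : Finset ι} (hSM : S ⊆ M) (hMN : M ⊆ N) (g : F) :
    moebiusTransform (fun Z => E (N \ S ∪ Z)) S • g
        = moebiusTransform (fun Z => E (M \ S ∪ Z)) S • g ↔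
      ∀ Z ⊆ N, S ⊂ Z → (Z ∩ (N \ M)).Nonempty → moebiusTransform E Z • g = 0 := by
  have h_mem : ∀ Z, Z ∈ Icc S N \ Icc S M ↔ Z ⊆ N ∧ S ⊂ Z ∧ (Z ∩ (N \ M)).Nonempty := by
    intro Z
    simp only [mem_sdiff, mem_Icc, Finset.Nonempty, mem_inter]
    grind
  rw [moebiusTransform_sdiff_union E (hSM.trans hMN), moebiusTransform_sdiff_union E hSM,
    ← sub_eq_zero, ← sub_smul, ← sum_sdiff_eq_sub (Icc_subset_Icc_right hMN),
    sum_smul_eq_zero_iff_of_orthogonalIdempotents (orthogonalIdempotents_moebiusTransform hE)]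
  simp only [h_mem, and_imp]

theorem stmt10_general (hE : ∀ A B, E A * E B = E (A ∩ B)) {S L M N : Finset ι}
    (hSL : S ⊆ L) (hLM : L ⊆ M) (hMN : M ⊆ N) (f g : F) :
    ((∀ A, S ⊆ A → A ⊆ L → moebiusTransform E A • f = moebiusTransform E A • g) ∧
      ∀ Z ⊆ N, S ⊂ Z → (Z ∩ (N \ M)).Nonempty → moebiusTransform E Z • g = 0) ↔
    (moebiusTransform (fun R => E (L \ R)) S • (f - E M • g) = 0 ∧
      moebiusTransform (fun Z => E (N \ S ∪ Z)) S • g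
        = moebiusTransform (fun Z => E (M \ S ∪ Z)) S • g) :=
  and_congr (moebiusTransform_sdiff_smul_sub_eq_zero_iff hE hSL hLM f g).symm
    (moebiusTransform_sdiff_union_smul_eq_iff hE (hSL.trans hLM) hMN g).symm

end OrthogonalProjections

section CoordAverage

variable {ι : Type*} [Fintype ι] [DecidableEq ι] {α : ι → Type*} [∀ i, Fintype (α i)]
  {F : Type*} [AddCommGroup F] [Module ℚ≥0 F]

/-- Averaging a function of configurations over all coordinates outside `A`. The average runs over
full configurations `y`, of which only the coordinates outside `A` matter. -/
def coordAverage (α : ι → Type*) [∀ i, Fintype (α i)] (F : Type*) [AddCommGroup F]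
    [Module ℚ≥0 F] (A : Finset ι) : AddMonoid.End ((∀ i, α i) → F) where
  toFun f x := 𝔼 y, f (A.piecewise x y)
  map_zero' := by ext; simp
  map_add' f g := by ext; simp [expect_add_distrib]

theorem coordAverage_smul_apply (A : Finset ι) (f : (∀ i, α i) → F) (x : ∀ i, α i) :
    (coordAverage α F A • f) x = 𝔼 y, f (A.piecewise x y) :=
  rfl

-- Exchanging the coordinates outside `B` between `y` and `z` is an involution.
theorem expect_expect_piecewise (B : Finset ι) (f : (∀ i, α i) → F) :
    𝔼 y, 𝔼 z, f (B.piecewise y z) = 𝔼 y, f y := by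
  rcases isEmpty_or_nonempty (∀ i, α i) with _ | _
  · simp
  have h_swap : 𝔼 y, 𝔼 z, f (B.piecewise y z) = 𝔼 y, 𝔼 _z : ∀ i, α i, f y := by
    rw [← expect_product', ← expect_product']
    refine expect_nbij' (fun w => (B.piecewise w.1 w.2, B.piecewise w.2 w.1))
      (fun w => (B.piecewise w.1 w.2, B.piecewise w.2 w.1)) ?_ ?_ ?_ ?_ ?_ <;>
      simp [piecewise_same]
  simpa only [Fintype.expect_const] using h_swap

theorem coordAverage_mul (A B : Finset ι) :
    coordAverage α F A * coordAverage α F B = coordAverage α F (A ∩ B) := by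
  ext f x
  have h_piecewise : ∀ y z : ∀ i, α i, B.piecewise (A.piecewise x y) z
      = (A ∩ B).piecewise x (B.piecewise y z) := by
    intro y z
    ext i
    by_cases hA : i ∈ A <;> by_cases hB : i ∈ B <;> simp [hA, hB]
  calc
    _ = 𝔼 y, 𝔼 z : ∀ i, α i, f (B.piecewise (A.piecewise x y) z) := rfl
    _ = 𝔼 y, f ((A ∩ B).piecewise x y) := by
      simp only [h_piecewise]
      exact expect_expect_piecewise B fun y => f ((A ∩ B).piecewise x y)

variable [∀ i, DecidableEq (α i)]

theorem coordAverage_smul_apply_eq_expect_filter (A : Finset ι) (f : (∀ i, α i) → F)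
    (x : ∀ i, α i) : (coordAverage α F A • f) x = 𝔼 j with ∀ i ∈ A, j i = x i, f j := by
  have h_fiber : (univ.filter fun j : ∀ i, α i => ∀ i ∈ A, j i = x i).Nonempty :=
    ⟨x, by simp⟩
  have : Nonempty (∀ i, α i) := ⟨x⟩
  have h_fix : ∀ j : ∀ i, α i, (∀ i ∈ A, j i = x i) → A.piecewise x j = j := fun j hj => by
    rw [piecewise_congr A (fun i hi => (hj i hi).symm) fun _ _ => rfl, piecewise_same]
  have h_swap : 𝔼 j : ∀ i, α i with ∀ i ∈ A, j i = x i, 𝔼 y : ∀ i, α i, f (A.piecewise x y)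
      = 𝔼 j : ∀ i, α i with ∀ i ∈ A, j i = x i, 𝔼 _y : ∀ i, α i, f j := by
    rw [← expect_product', ← expect_product']
    refine expect_nbij' (fun w => (A.piecewise x w.2, A.piecewise w.2 w.1))
      (fun w => (A.piecewise x w.2, A.piecewise w.2 w.1)) ?_ ?_ ?_ ?_ ?_ <;>
      simp +contextual [h_fix, piecewise_same]
  simpa only [coordAverage_smul_apply, Fintype.expect_const, expect_const h_fiber] using h_swap

theorem card_filter_forall_mem_eq (A : Finset ι) (x : ∀ i, α i) :
    #{j : ∀ i, α i | ∀ i ∈ A, j i = x i} = ∏ i ∈ Aᶜ, Fintype.card (α i) := by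
  have h_pi : ({j : ∀ i, α i | ∀ i ∈ A, j i = x i} : Finset _)
      = Fintype.piFinset fun i => if i ∈ A then {x i} else univ := by
    ext j
    simp only [mem_filter_univ, Fintype.mem_piFinset]
    refine forall_congr' fun i => ?_
    split_ifs with hi <;> simp [hi]
  rw [h_pi, Fintype.card_piFinset, ← prod_mul_prod_compl A]
  have h_prod : ∏ i ∈ A, #(if i ∈ A then {x i} else univ) = 1 :=
    prod_eq_one fun i hi => by simp [hi]
  rw [h_prod, one_mul]
  exact prod_congr rfl fun i hi => by simp [mem_compl.1 hi]

theorem coordAverage_smul_apply_eq_sum {K : Type*} [Field K] [CharZero K] (A : Finset ι)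
    (f : (∀ i, α i) → K) (x : ∀ i, α i) :
    (coordAverage α K A • f) x
      = (∏ i ∈ Aᶜ, (Fintype.card (α i) : K))⁻¹ * ∑ j with ∀ i ∈ A, j i = x i, f j := by
  rw [coordAverage_smul_apply_eq_expect_filter, expect_eq_sum_div_card, card_filter_forall_mem_eq,
    Nat.cast_prod, div_eq_inv_mul]

/-- The function `log p_M`. Its averages over coordinates are the `ν_L^M`. -/
noncomputable def logMargin (p : (∀ i, α i) → ℝ) (M : Finset ι) (x : ∀ i, α i) : ℝ :=
  Real.log (margin p M x)

theorem coordAverage_smul_logMargin (p : (∀ i, α i) → ℝ) (L M : Finset ι) :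
    coordAverage α ℝ L • logMargin p M = nu p L M :=
  funext fun x => coordAverage_smul_apply_eq_sum L (logMargin p M) x

theorem logMargin_sub_nu (p : (∀ i, α i) → ℝ) (M N : Finset ι) :
    logMargin p M - nu p M N = dd p M N :=
  rfl

theorem coordAverage_smul_dd (p : (∀ i, α i) → ℝ) (M N Z : Finset ι) :
    coordAverage α ℝ Z • dd p M N = dtilde p M N Z :=
  funext fun x => coordAverage_smul_apply_eq_sum Z (dd p M N) x

theorem moebiusTransform_coordAverage_smul_logMargin (p : (∀ i, α i) → ℝ) (L M : Finset ι) :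
    moebiusTransform (coordAverage α ℝ) L • logMargin p M = mll p L M := by
  ext x
  simp only [moebiusTransform_smul_apply, coordAverage_smul_logMargin, mll]

end CoordAverage

theorem stmt10 (p : (∀ v, 𝔛 v) → ℝ) (hp : ∀ x, 0 < p x) (hsum : ∑ x, p x = 1)
    (S L M N : Finset V) (hS : S.Nonempty) (hSL : S ⊆ L) (hLM : L ⊆ M) (hMN : M ⊂ N) :
    ((∀ A : Finset V, S ⊆ A → A ⊆ L → ∀ x : ∀ v, 𝔛 v, mll p A M x = mll p A N x) ∧
     (∀ Z ⊆ N, S ⊂ Z → (Z ∩ (N \ M)).Nonempty → ∀ x : ∀ v, 𝔛 v, mll p Z N x = 0)) ↔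
    ((∀ x : ∀ v, 𝔛 v,
        ∑ R ∈ S.powerset, (-1 : ℝ) ^ ((S \ R).card) * dtilde p M N (L \ R) x = 0) ∧
     (∀ x : ∀ v, 𝔛 v,
        ∑ Z ∈ S.powerset, (-1 : ℝ) ^ ((S \ Z).card) * nu p ((N \ S) ∪ Z) N x =
        ∑ Z ∈ S.powerset, (-1 : ℝ) ^ ((S \ Z).card) * nu p ((M \ S) ∪ Z) N x)) := by
  simpa only [moebiusTransform_coordAverage_smul_logMargin, coordAverage_smul_logMargin,
    logMargin_sub_nu, coordAverage_smul_dd, moebiusTransform_smul_apply, funext_iff,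
    Pi.zero_apply] using
    stmt10_general (E := coordAverage 𝔛 ℝ) coordAverage_mul hSL hLM hMN.subset
      (logMargin p M) (logMargin p N)
end

section
/- Let p, q, r be three distinct elements of V. Then the 3-dimensional table 𝔛_{\{p,q,r\}} is strictly collapsible over {p} into 𝔛_{\{q,r\}} with respect to λ_{\{q\}}^{\{p,q,r\}} and λ_{\{q,r\}}^{\{p,q,r\}}, and strictly collapsible over {q} into 𝔛_{\{p,r\}} with respect to λ_{\{p\}}^{\{p,q,r\}} and λ_{\{p,r\}}^{\{p,q,r\}}, if and only if X_p ⟂ X_q | X_r. -/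
open Finset

variable {V : Type*} [Fintype V] [DecidableEq V]
variable {𝔛 : V → Type*} [∀ v, Fintype (𝔛 v)] [∀ v, DecidableEq (𝔛 v)]
  [∀ v, Nonempty (𝔛 v)]

/-- `X_A ⟂ X_B | X_C`: `p_{A∪B∪C}·p_C = p_{A∪C}·p_{B∪C}` pointwise. -/
def CondIndep (p : (∀ v, 𝔛 v) → ℝ) (A B C : Finset V) : Prop :=
  ∀ x : ∀ v, 𝔛 v,
    margin p (A ∪ B ∪ C) x * margin p C x = margin p (A ∪ C) x * margin p (B ∪ C) x

/-- `𝔛_N` is strictly collapsible over `N ∖ M'` into `𝔛_{M'}` with respect to `λ_L^N`: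
`λ_L^{M'} = λ_L^N` and `λ_Z^N = 0` for every `Z ⊆ N` with `L ⊊ Z` meeting `N ∖ M'`. -/
def StrictlyCollapsible (p : (∀ v, 𝔛 v) → ℝ) (N M' L : Finset V) : Prop :=
  (∀ x : ∀ v, 𝔛 v, mll p L M' x = mll p L N x) ∧
  (∀ Z ⊆ N, L ⊂ Z → (Z ∩ (N \ M')).Nonempty → ∀ x : ∀ v, 𝔛 v, mll p Z N x = 0)

/-!
Averaging over the coordinates outside `A` is the conditional expectation `E_A` for the uniform
distribution: it fixes functions of `x_A`, such functions can be pulled out of it, and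
`E_T E_S = E_{S ∩ T}`. The parameters `λ_L^M` are the Möbius transform of `L ↦ E_L (log p_M)`.

If `p_{S ∪ T} p_{S ∩ T} = p_S p_T`, then `λ_L^{S ∪ T} + λ_L^{S ∩ T} = λ_L^S + λ_L^T`, and
`λ_L^M` vanishes unless `L ⊆ M`, which gives strict collapsibility. Conversely, if `λ_Z^{S ∪ T} = 0`
whenever `Z` lies in neither `S` nor `T`, Möbius inversion writes `log p_{S ∪ T}` as a function of
`x_S` plus a function of `x_T`; so `p_{S ∪ T}` factorizes, and integrating the factors out yields
the identity between the marginals.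
-/

section Mobius

variable {α R : Type*} [DecidableEq α] [Ring R]

/-- The Möbius transform of a set function, inverse to summation over all subsets; the
parameters `mll` are obtained from the averages `nu` by this transform. -/
def mobius (f : Finset α → R) (s : Finset α) : R :=
  ∑ t ∈ s.powerset, (-1) ^ (s \ t).card * f t

lemma mobius_insert (f : Finset α → R) {s : Finset α} {a : α} (ha : a ∉ s) :
    mobius f (insert a s) = mobius (fun t ↦ f (insert a t)) s - mobius f s := by
  simp only [mobius]
  rw [sum_powerset_insert ha, add_comm, sub_eq_add_neg, ← sum_neg_distrib]
  congr 1 <;> refine sum_congr rfl fun t ht ↦ ?_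
  · rw [insert_sdiff_insert, sdiff_insert_of_notMem ha]
  · have hat : a ∉ t := fun h ↦ ha (mem_powerset.1 ht h)
    rw [insert_sdiff_of_notMem _ hat, card_insert_of_notMem (by simp [ha]), pow_succ]
    simp

lemma sum_powerset_mobius (f : Finset α → R) (s : Finset α) :
    ∑ t ∈ s.powerset, mobius f t = f s := by
  induction s using Finset.induction_on generalizing f with
  | empty => simp [mobius]
  | insert a s ha ih =>
    have mobius_insert_of_subset : ∀ t ∈ s.powerset,
        mobius f (insert a t) = mobius (fun u ↦ f (insert a u)) t - mobius f t :=
      fun t ht ↦ mobius_insert f fun h ↦ ha (mem_powerset.1 ht h)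
    rw [sum_powerset_insert ha, sum_congr rfl mobius_insert_of_subset, sum_sub_distrib,
      add_sub_cancel, ih]

lemma mobius_eq_zero_of_insert_eq {f : Finset α → R} {s : Finset α} {a : α} (ha : a ∈ s)
    (hf : ∀ t, f (insert a t) = f t) : mobius f s = 0 := by
  rw [← insert_erase ha, mobius_insert f (notMem_erase a s), funext hf, sub_self]

lemma add_inter_eq_add_of_mobius_eq_zero {f : Finset α → R} {s t : Finset α}
    (h : ∀ u ⊆ s ∪ t, ¬ u ⊆ s → ¬ u ⊆ t → mobius f u = 0) :
    f (s ∪ t) + f (s ∩ t) = f s + f t := by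
  have powerset_subset : s.powerset ∪ t.powerset ⊆ (s ∪ t).powerset :=
    union_subset (powerset_mono.2 subset_union_left) (powerset_mono.2 subset_union_right)
  have sum_union : ∑ u ∈ s.powerset ∪ t.powerset, mobius f u = f (s ∪ t) := by
    rw [← sum_powerset_mobius f (s ∪ t)]
    refine sum_subset powerset_subset fun u hu hu' ↦ ?_
    simp only [mem_union, mem_powerset, not_or] at hu hu'
    exact h u hu hu'.1 hu'.2
  have sum_inter : ∑ u ∈ s.powerset ∩ t.powerset, mobius f u = f (s ∩ t) := by
    have powerset_inter : s.powerset ∩ t.powerset = (s ∩ t).powerset := by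
      ext u
      simp only [mem_inter, mem_powerset, subset_inter_iff]
    rw [powerset_inter, sum_powerset_mobius]
  rw [← sum_union, ← sum_inter, sum_union_inter, sum_powerset_mobius, sum_powerset_mobius]

end Mobius

section Fiber

omit [∀ v, Nonempty (𝔛 v)]

/-- The configurations agreeing with `x` on `A`. -/
def fiber (A : Finset V) (x : ∀ v, 𝔛 v) : Finset (∀ v, 𝔛 v) :=
  univ.filter fun y ↦ ∀ v ∈ A, y v = x v

lemma mem_fiber {A : Finset V} {x y : ∀ v, 𝔛 v} : y ∈ fiber A x ↔ ∀ v ∈ A, y v = x v := by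
  simp [fiber]

lemma fiber_dependsOn (A : Finset V) : DependsOn (fiber (𝔛 := 𝔛) A) (A : Set V) := by
  intro x y h
  ext z
  simp only [mem_fiber]
  exact forall₂_congr fun v hv ↦ by rw [h v hv]

lemma margin_eq_sum_fiber (p : (∀ v, 𝔛 v) → ℝ) (A : Finset V) (x : ∀ v, 𝔛 v) :
    margin p A x = ∑ y ∈ fiber A x, p y := rfl

lemma margin_dependsOn (p : (∀ v, 𝔛 v) → ℝ) (A : Finset V) :
    DependsOn (margin p A) (A : Set V) := fun x y h ↦ by
  simp only [margin_eq_sum_fiber, fiber_dependsOn A h]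

lemma margin_pos {p : (∀ v, 𝔛 v) → ℝ} (hp : ∀ x, 0 < p x) (A : Finset V) (x : ∀ v, 𝔛 v) :
    0 < margin p A x :=
  sum_pos (fun y _ ↦ hp y) ⟨x, by simp⟩

variable (𝔛) in
/-- The number of configurations in each fiber over the coordinates in `A`, as a real number; it
normalizes the average `nu`. -/
def fiberCard (A : Finset V) : ℝ :=
  ∏ v ∈ Aᶜ, (Fintype.card (𝔛 v) : ℝ)

lemma card_fiber (A : Finset V) (x : ∀ v, 𝔛 v) : ((fiber A x).card : ℝ) = fiberCard 𝔛 A := by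
  have fiber_eq_pi : fiber A x = Fintype.piFinset fun v ↦ if v ∈ A then {x v} else univ := by
    ext y
    simp only [mem_fiber, Fintype.mem_piFinset]
    refine forall_congr' fun v ↦ ?_
    by_cases hv : v ∈ A <;> simp [hv]
  rw [fiber_eq_pi, Fintype.card_piFinset, Nat.cast_prod, fiberCard, ← prod_mul_prod_compl A,
    prod_eq_one fun v hv ↦ by simp [hv], one_mul]
  exact prod_congr rfl fun v hv ↦ by simp [mem_compl.1 hv]

omit [∀ v, DecidableEq (𝔛 v)] in
lemma fiberCard_union_mul_inter (S T : Finset V) :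
    fiberCard 𝔛 (S ∪ T) * fiberCard 𝔛 (S ∩ T) = fiberCard 𝔛 S * fiberCard 𝔛 T := by
  simp only [fiberCard, compl_union, compl_inter]
  rw [mul_comm, prod_union_inter]

lemma filter_fiber_eq_fiber_piecewise {S T : Finset V} {x z : ∀ v, 𝔛 v} (hz : z ∈ fiber (S ∩ T) x) :
    (fiber T x).filter (fun y ↦ z ∈ fiber S y) = fiber (S ∪ T) (S.piecewise z x) := by
  ext y
  simp only [mem_filter, mem_fiber, mem_union, mem_inter, piecewise] at hz ⊢
  grind

lemma margin_margin (G : (∀ v, 𝔛 v) → ℝ) (S T : Finset V) (x : ∀ v, 𝔛 v) :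
    margin (margin G S) T x = fiberCard 𝔛 (S ∪ T) * margin G (S ∩ T) x := by
  have mem_fiber_inter {y z : ∀ v, 𝔛 v} (hy : y ∈ fiber T x) (hz : z ∈ fiber S y) :
      z ∈ fiber (S ∩ T) x := by
    simp only [mem_fiber, mem_inter] at hy hz ⊢
    exact fun v hv ↦ (hz v hv.1).trans (hy v hv.2)
  calc margin (margin G S) T x
      = ∑ z ∈ fiber (S ∩ T) x, ∑ _y ∈ (fiber T x).filter (fun y ↦ z ∈ fiber S y), G z := by
        simp only [margin_eq_sum_fiber]
        refine sum_comm' fun y z ↦ ?_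
        rw [mem_filter]
        exact ⟨fun h ↦ ⟨h, mem_fiber_inter h.1 h.2⟩, fun h ↦ h.1⟩
    _ = ∑ z ∈ fiber (S ∩ T) x, fiberCard 𝔛 (S ∪ T) * G z :=
        sum_congr rfl fun z hz ↦ by
          rw [filter_fiber_eq_fiber_piecewise hz, sum_const, nsmul_eq_mul, card_fiber]
    _ = fiberCard 𝔛 (S ∪ T) * margin G (S ∩ T) x := by
        rw [margin_eq_sum_fiber, mul_sum]

/-- The average of `G` over the configurations agreeing with `x` on `A`, that is, the conditional
expectation of `G` given the `A`-coordinates under the uniform distribution. -/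
noncomputable def fiberMean (G : (∀ v, 𝔛 v) → ℝ) (A : Finset V) (x : ∀ v, 𝔛 v) : ℝ :=
  (fiberCard 𝔛 A)⁻¹ * margin G A x

lemma nu_eq_fiberMean (p : (∀ v, 𝔛 v) → ℝ) (L M : Finset V) (x : ∀ v, 𝔛 v) :
    nu p L M x = fiberMean (fun y ↦ Real.log (margin p M y)) L x := rfl

lemma fiberMean_dependsOn (G : (∀ v, 𝔛 v) → ℝ) (A : Finset V) :
    DependsOn (fiberMean G A) (A : Set V) := fun x y h ↦ by
  rw [fiberMean, fiberMean, margin_dependsOn G A h]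

lemma fiberMean_mul_left {a : (∀ v, 𝔛 v) → ℝ} {A : Finset V} (ha : DependsOn a (A : Set V))
    (G : (∀ v, 𝔛 v) → ℝ) (x : ∀ v, 𝔛 v) :
    fiberMean (fun y ↦ a y * G y) A x = a x * fiberMean G A x := by
  have margin_mul_left : margin (fun y ↦ a y * G y) A x = a x * margin G A x := by
    rw [margin_eq_sum_fiber, margin_eq_sum_fiber, mul_sum]
    exact sum_congr rfl fun y hy ↦ by rw [ha (mem_fiber.1 hy)]
  rw [fiberMean, margin_mul_left, mul_left_comm, ← fiberMean]

lemma fiberMean_mul_right {a : (∀ v, 𝔛 v) → ℝ} {A : Finset V} (ha : DependsOn a (A : Set V))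
    (G : (∀ v, 𝔛 v) → ℝ) (x : ∀ v, 𝔛 v) :
    fiberMean (fun y ↦ G y * a y) A x = fiberMean G A x * a x := by
  simp only [mul_comm _ (a _), fiberMean_mul_left ha]

end Fiber

omit [∀ v, DecidableEq (𝔛 v)] in
lemma fiberCard_ne_zero (A : Finset V) : fiberCard 𝔛 A ≠ 0 :=
  prod_ne_zero_iff.2 fun _ _ ↦ Nat.cast_ne_zero.2 Fintype.card_ne_zero

lemma margin_eq_fiberCard_mul_fiberMean (G : (∀ v, 𝔛 v) → ℝ) (A : Finset V) (x : ∀ v, 𝔛 v) :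
    margin G A x = fiberCard 𝔛 A * fiberMean G A x :=
  (mul_inv_cancel_left₀ (fiberCard_ne_zero A) _).symm

lemma fiberMean_eq_self {G : (∀ v, 𝔛 v) → ℝ} {A : Finset V} (hG : DependsOn G (A : Set V)) :
    fiberMean G A = G := by
  funext x
  rw [fiberMean, margin_eq_sum_fiber, sum_congr rfl fun y hy ↦ hG (mem_fiber.1 hy), sum_const,
    nsmul_eq_mul, card_fiber, inv_mul_cancel_left₀ (fiberCard_ne_zero A)]

lemma fiberMean_fiberMean (G : (∀ v, 𝔛 v) → ℝ) (S T : Finset V) :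
    fiberMean (fiberMean G S) T = fiberMean G (S ∩ T) := by
  funext x
  have margin_fiberMean : margin (fiberMean G S) T x =
      (fiberCard 𝔛 S)⁻¹ * margin (margin G S) T x := by
    simp only [margin_eq_sum_fiber _ T, fiberMean, mul_sum]
  have hS := fiberCard_ne_zero (𝔛 := 𝔛) S
  have hT := fiberCard_ne_zero (𝔛 := 𝔛) T
  have hST := fiberCard_ne_zero (𝔛 := 𝔛) (S ∩ T)
  rw [fiberMean, margin_fiberMean, margin_margin, fiberMean]
  field_simp
  linear_combination margin G (S ∩ T) x * fiberCard_union_mul_inter (𝔛 := 𝔛) S T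

lemma fiberMean_eq_fiberMean_inter {G : (∀ v, 𝔛 v) → ℝ} {M : Finset V}
    (hG : DependsOn G (M : Set V)) (A : Finset V) : fiberMean G A = fiberMean G (M ∩ A) := by
  rw [← fiberMean_fiberMean, fiberMean_eq_self hG]

lemma fiberMean_union_mul_inter {G a b : (∀ v, 𝔛 v) → ℝ} {S T : Finset V}
    (ha : DependsOn a (S : Set V)) (hb : DependsOn b (T : Set V))
    (hG : fiberMean G (S ∪ T) = fun x ↦ a x * b x) (x : ∀ v, 𝔛 v) :
    fiberMean G (S ∪ T) x * fiberMean G (S ∩ T) x = fiberMean G S x * fiberMean G T x := by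
  have mean_S : fiberMean G S = fun x ↦ a x * fiberMean b (S ∩ T) x := by
    funext x
    rw [← union_inter_cancel_left (s := S) (t := T), ← fiberMean_fiberMean, hG,
      union_inter_cancel_left, fiberMean_mul_left ha, fiberMean_eq_fiberMean_inter hb, inter_comm]
  have mean_T : fiberMean G T x = fiberMean a (S ∩ T) x * b x := by
    rw [← union_inter_cancel_right (s := S) (t := T), ← fiberMean_fiberMean, hG,
      union_inter_cancel_right, fiberMean_mul_right hb, fiberMean_eq_fiberMean_inter ha]
  have mean_inter : fiberMean G (S ∩ T) x = fiberMean a (S ∩ T) x * fiberMean b (S ∩ T) x := by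
    rw [← inter_eq_right.2 (inter_subset_left (s₁ := S) (s₂ := T)), ← fiberMean_fiberMean, mean_S,
      inter_eq_right.2 inter_subset_left, fiberMean_mul_right (fiberMean_dependsOn b (S ∩ T))]
  rw [mean_S, mean_T, mean_inter, hG]
  ring

/-- The marginal of `p` on `S ∪ T` decomposes over `S` and `T`: the coordinates in `S ∖ T` and in
`T ∖ S` are conditionally independent given those in `S ∩ T`. -/
def Decomposes (p : (∀ v, 𝔛 v) → ℝ) (S T : Finset V) : Prop :=
  ∀ x, margin p (S ∪ T) x * margin p (S ∩ T) x = margin p S x * margin p T x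

omit [∀ v, Nonempty (𝔛 v)] in
lemma Decomposes.symm {p : (∀ v, 𝔛 v) → ℝ} {S T : Finset V} (h : Decomposes p S T) :
    Decomposes p T S := fun x ↦ by
  rw [union_comm, inter_comm, h x, mul_comm]

omit [∀ v, Nonempty (𝔛 v)] in
lemma condIndep_iff_decomposes {p : (∀ v, 𝔛 v) → ℝ} {A B C : Finset V} (hAB : Disjoint A B) :
    CondIndep p A B C ↔ Decomposes p (A ∪ C) (B ∪ C) := by
  rw [CondIndep, Decomposes, ← union_union_distrib_right, ← inter_union_distrib_right,
    disjoint_iff_inter_eq_empty.1 hAB, empty_union]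

lemma decomposes_of_margin_eq_mul {p a b : (∀ v, 𝔛 v) → ℝ} {S T : Finset V}
    (ha : DependsOn a (S : Set V)) (hb : DependsOn b (T : Set V))
    (hab : ∀ x, margin p (S ∪ T) x = a x * b x) : Decomposes p S T := fun x ↦ by
  have mean_union : fiberMean p (S ∪ T) = fun x ↦ a x * ((fiberCard 𝔛 (S ∪ T))⁻¹ * b x) := by
    funext x
    rw [fiberMean, hab, mul_left_comm]
  have means_mul := fiberMean_union_mul_inter ha (fun _ _ h ↦ by rw [hb h]) mean_union x
  simp only [margin_eq_fiberCard_mul_fiberMean]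
  rw [mul_mul_mul_comm, fiberCard_union_mul_inter, means_mul, mul_mul_mul_comm]

omit [∀ v, Nonempty (𝔛 v)] in
lemma log_margin_dependsOn (p : (∀ v, 𝔛 v) → ℝ) (M : Finset V) :
    DependsOn (fun x ↦ Real.log (margin p M x)) (M : Set V) :=
  fun _ _ h ↦ congrArg Real.log (margin_dependsOn p M h)

omit [∀ v, Nonempty (𝔛 v)] in
lemma mll_eq_mobius (p : (∀ v, 𝔛 v) → ℝ) (L M : Finset V) (x : ∀ v, 𝔛 v) :
    mll p L M x = mobius (fun A ↦ nu p A M x) L := rfl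

lemma mll_eq_zero_of_not_subset (p : (∀ v, 𝔛 v) → ℝ) {L M : Finset V} (hLM : ¬ L ⊆ M)
    (x : ∀ v, 𝔛 v) : mll p L M x = 0 := by
  obtain ⟨v, hvL, hvM⟩ := not_subset.1 hLM
  rw [mll_eq_mobius]
  refine mobius_eq_zero_of_insert_eq hvL fun A ↦ ?_
  have mean_eq := fiberMean_eq_fiberMean_inter (log_margin_dependsOn p M)
  rw [nu_eq_fiberMean, nu_eq_fiberMean, mean_eq, inter_insert_of_notMem hvM, ← mean_eq]

omit [∀ v, Nonempty (𝔛 v)] in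
lemma Decomposes.mll_union_add_inter {p : (∀ v, 𝔛 v) → ℝ} (hp : ∀ x, 0 < p x) {S T : Finset V}
    (h : Decomposes p S T) (L : Finset V) (x : ∀ v, 𝔛 v) :
    mll p L (S ∪ T) x + mll p L (S ∩ T) x = mll p L S x + mll p L T x := by
  have log_margin_add (y) : Real.log (margin p (S ∪ T) y) + Real.log (margin p (S ∩ T) y) =
      Real.log (margin p S y) + Real.log (margin p T y) := by
    have margin_ne_zero (A) : margin p A y ≠ 0 := (margin_pos hp A y).ne'
    rw [← Real.log_mul (margin_ne_zero _) (margin_ne_zero _), h y,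
      Real.log_mul (margin_ne_zero _) (margin_ne_zero _)]
  simp only [mll, nu, ← sum_add_distrib, ← mul_add, log_margin_add]

lemma decomposes_of_mll_eq_zero {p : (∀ v, 𝔛 v) → ℝ} (hp : ∀ x, 0 < p x) {S T : Finset V}
    (h : ∀ Z ⊆ S ∪ T, ¬ Z ⊆ S → ¬ Z ⊆ T → ∀ x, mll p Z (S ∪ T) x = 0) : Decomposes p S T := by
  let ν (A : Finset V) (x : ∀ v, 𝔛 v) : ℝ := nu p A (S ∪ T) x
  have nu_dependsOn (A) : DependsOn (ν A) (A : Set V) := fiberMean_dependsOn _ A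
  refine decomposes_of_margin_eq_mul (a := fun x ↦ Real.exp (ν S x))
    (b := fun x ↦ Real.exp (ν T x - ν (S ∩ T) x)) (fun x y hxy ↦ ?_) (fun x y hxy ↦ ?_) fun x ↦ ?_
  · simp only [nu_dependsOn S hxy]
  · simp only [nu_dependsOn T hxy, (nu_dependsOn (S ∩ T)).mono (mod_cast inter_subset_right) hxy]
  · have nu_modular : ν (S ∪ T) x + ν (S ∩ T) x = ν S x + ν T x :=
      add_inter_eq_add_of_mobius_eq_zero (f := fun A ↦ ν A x) fun Z hZ hZS hZT ↦
        (mll_eq_mobius ..).symm.trans (h Z hZ hZS hZT x)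
    have nu_self : ν (S ∪ T) x = Real.log (margin p (S ∪ T) x) :=
      congrFun (fiberMean_eq_self (log_margin_dependsOn p (S ∪ T))) x
    rw [← Real.exp_add, ← add_sub_assoc, ← nu_modular, add_sub_cancel_right, nu_self,
      Real.exp_log (margin_pos hp _ x)]

lemma Decomposes.strictlyCollapsible {p : (∀ v, 𝔛 v) → ℝ} (hp : ∀ x, 0 < p x) {S T L : Finset V}
    (h : Decomposes p S T) (hLS : ¬ L ⊆ S) : StrictlyCollapsible p (S ∪ T) T L := by
  have mll_union {Z : Finset V} (hZS : ¬ Z ⊆ S) (x) : mll p Z (S ∪ T) x = mll p Z T x := by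
    have mll_add := h.mll_union_add_inter hp Z x
    have not_subset_inter : ¬ Z ⊆ S ∩ T := fun hZ ↦ hZS (hZ.trans inter_subset_left)
    rwa [mll_eq_zero_of_not_subset p not_subset_inter, mll_eq_zero_of_not_subset p hZS, add_zero,
      zero_add] at mll_add
  refine ⟨fun x ↦ (mll_union hLS x).symm, fun Z _ hLZ hZ x ↦ ?_⟩
  obtain ⟨v, hv⟩ := hZ
  rw [mem_inter, mem_sdiff] at hv
  rw [mll_union fun hZS ↦ hLS (hLZ.subset.trans hZS),
    mll_eq_zero_of_not_subset p fun hZT ↦ hv.2.2 (hZT hv.1)]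

lemma decomposes_iff_forall_strictlyCollapsible {p : (∀ v, 𝔛 v) → ℝ} (hp : ∀ x, 0 < p x)
    (S T : Finset V) :
    Decomposes p S T ↔ ∀ L ⊆ T, ¬ L ⊆ S → StrictlyCollapsible p (S ∪ T) T L := by
  refine ⟨fun h L _ hLS ↦ h.strictlyCollapsible hp hLS, fun h ↦ ?_⟩
  refine decomposes_of_mll_eq_zero hp fun Z hZ hZS hZT ↦ ?_
  have inter_not_subset : ¬ Z ∩ T ⊆ S := by grind
  have ssubset : Z ∩ T ⊂ Z := inter_subset_left.ssubset_of_ne (mt inter_eq_left.1 hZT)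
  have nonempty : (Z ∩ ((S ∪ T) \ T)).Nonempty := by
    obtain ⟨v, hvZ, hvT⟩ := not_subset.1 hZT
    exact ⟨v, by simp [hvZ, hvT, hZ hvZ]⟩
  exact (h (Z ∩ T) inter_subset_right inter_not_subset).2 Z hZ ssubset nonempty

lemma forall_subset_pair_not_subset_iff {α : Type*} [DecidableEq α] {i j k : α} (hji : j ≠ i)
    (hjk : j ≠ k) {P : Finset α → Prop} :
    (∀ L ⊆ {j, k}, ¬ L ⊆ {i, k} → P L) ↔ P {j} ∧ P {j, k} := by
  constructor
  · exact fun h ↦ ⟨h {j} (by simp) (by simp [hji, hjk]),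
      h {j, k} Subset.rfl (by simp [insert_subset_iff, hji, hjk])⟩
  · rintro ⟨h_single, h_pair⟩ L hL hLik
    obtain rfl | rfl : L = {j} ∨ L = {j, k} := by grind
    exacts [h_single, h_pair]

theorem stmt12_general {p : (∀ v, 𝔛 v) → ℝ} (hp : ∀ x, 0 < p x) {A B C : Finset V}
    (hAB : Disjoint A B) :
    ((∀ L ⊆ B ∪ C, ¬ L ⊆ A ∪ C → StrictlyCollapsible p (A ∪ B ∪ C) (B ∪ C) L) ∧
     (∀ L ⊆ A ∪ C, ¬ L ⊆ B ∪ C → StrictlyCollapsible p (A ∪ B ∪ C) (A ∪ C) L)) ↔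
    CondIndep p A B C := by
  rw [condIndep_iff_decomposes hAB, union_union_distrib_right]
  refine ⟨fun h ↦ (decomposes_iff_forall_strictlyCollapsible hp _ _).2 h.1, fun h ↦
    ⟨(decomposes_iff_forall_strictlyCollapsible hp _ _).1 h, ?_⟩⟩
  rw [union_comm (A ∪ C)]
  exact (decomposes_iff_forall_strictlyCollapsible hp _ _).1 h.symm

theorem stmt12 (p : (∀ v, 𝔛 v) → ℝ) (hp : ∀ x, 0 < p x) (hsum : ∑ x, p x = 1)
    (i j k : V) (hij : i ≠ j) (hik : i ≠ k) (hjk : j ≠ k) :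
    (StrictlyCollapsible p {i, j, k} {j, k} {j} ∧
     StrictlyCollapsible p {i, j, k} {j, k} {j, k} ∧
     StrictlyCollapsible p {i, j, k} {i, k} {i} ∧
     StrictlyCollapsible p {i, j, k} {i, k} {i, k}) ↔
    CondIndep p {i} {j} {k} := by
  simpa only [insert_union, singleton_union, and_assoc,
    forall_subset_pair_not_subset_iff hij.symm hjk, forall_subset_pair_not_subset_iff hij hik]
    using stmt12_general hp (A := {i}) (B := {j}) (C := {k}) (disjoint_singleton.2 hij)
end
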